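/- arXiv:2107.09310 — 9 statements merged into one kernel-verified Lean document; each statement's English description precedes it below -/
import Mathlib

section
/- Let n ≥ 1, let p, q : {1,…,n} → ℝ≥0, and let M ⊆ {1,…,n} with m = |M|. Let a₁ ≤ … ≤ a_{n−m} be the values (p_j)_{j ∈ {1,…,n}\M} sorted in non-decreasing order, let b₁ ≤ … ≤ b_{n−m} be the values (q_j)_{j ∈ {1,…,n}\M} sorted in non-decreasing order, and set d_k = a_k + b_k for k = 1,…,n−m. Let e₁ ≤ … ≤ e_n be the non-decreasing sorting of the multiset formed by the values {p_j + q_j : j ∈ M} together with {d_1,…,d_{n−m}}. Then f(M) = ∑_{i=1}^n (n+1−i)·e_i. -/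
open Finset



/-- Cost of a schedule `σ` (position `i`, 0-indexed, has weight `n - i`,
i.e. position `i+1` in 1-indexed notation has weight `n + 1 - (i+1)`). -/
noncomputable def cost (n : ℕ) (w : Fin n → ℝ) (σ : Equiv.Perm (Fin n)) : ℝ :=
  ∑ i : Fin n, ((n : ℝ) - ((i : ℕ) : ℝ)) * w (σ i)

/-- `f(M)`: minimal combined cost over pairs of schedules agreeing on the
positions of all jobs in `M`. -/
noncomputable def fval (n : ℕ) (p q : Fin n → ℝ) (M : Finset (Fin n)) : ℝ :=
  sInf {v : ℝ | ∃ σ τ : Equiv.Perm (Fin n),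
    (∀ j ∈ M, σ.symm j = τ.symm j) ∧ v = cost n p σ + cost n q τ}

/-- `OPT(Δ)`: optimal value of the recoverable robust single machine
scheduling problem. -/
noncomputable def OPT (n : ℕ) (p q : Fin n → ℝ) (Δ : ℕ) : ℝ :=
  sInf {v : ℝ | ∃ σ τ : Equiv.Perm (Fin n),
    Δ ≤ (Finset.univ.filter (fun j => σ.symm j = τ.symm j)).card ∧
    v = cost n p σ + cost n q τ}

/-- Value of (UB-SMSP): both stages forced identical. -/
noncomputable def UBval (n : ℕ) (p q : Fin n → ℝ) : ℝ :=
  sInf {v : ℝ | ∃ σ : Equiv.Perm (Fin n), v = cost n (fun j => p j + q j) σ}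

/-- Value of (LB-SMSP): the two stages optimised independently. -/
noncomputable def LBval (n : ℕ) (p q : Fin n → ℝ) : ℝ :=
  sInf {v : ℝ | ∃ σ : Equiv.Perm (Fin n), v = cost n p σ} +
  sInf {v : ℝ | ∃ τ : Equiv.Perm (Fin n), v = cost n q τ}


lemma exists_sort_enum {n k : ℕ} (s : Finset (Fin n)) (hk : s.card = k) (f : Fin n → ℝ) :
    ∃ u : Fin k ≃ {x // x ∈ s}, Monotone (fun r => f (u r)) ∧
      (s.val.map f).sort (· ≤ ·) = List.ofFn (fun r => f (u r)) := by
  let g : Fin k ≃ {x // x ∈ s} := (s.equivFinOfCardEq hk).symm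
  let u := (Tuple.sort (fun r => f (g r))).trans g
  have hm : Monotone (fun r => f (u r)) := Tuple.monotone_sort (fun r => f (g r))
  refine ⟨u, hm, ?_⟩
  have hmul : (s.val.map f) = (↑(List.ofFn (fun r => f (u r))) : Multiset ℝ) := by
    have h1 : (s.val.map f) = (univ : Finset {x // x ∈ s}).val.map (fun x : {x // x ∈ s} => f x) := by
      rw [Finset.univ_eq_attach, Finset.attach_val]
      exact (Multiset.attach_map_val' s.val f).symm
    rw [h1, ← Finset.map_univ_equiv u, Finset.map_val, Multiset.map_map,
      ← Fin.univ_val_map]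
    rfl
  rw [hmul]
  refine List.Perm.eq_of_sortedLE (Multiset.pairwise_sort _ _).sortedLE hm.sortedLE_ofFn ?_
  rw [← Multiset.coe_eq_coe, Multiset.sort_eq]

lemma antivary_aux {n k : ℕ} (P : Finset (Fin n)) (of : Fin k ≃o P)
    (h : Fin k → ℝ) (hh : Monotone h) (g : Fin n → ℝ)
    (hg : ∀ i (hi : i ∈ P), g i = h (of.symm ⟨i, hi⟩)) :
    AntivaryOn (fun i : Fin n => (n : ℝ) - ((i : ℕ) : ℝ)) g (P : Set (Fin n)) := by
  intro i hi j hj hlt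
  rw [hg i hi, hg j hj] at hlt
  have h1 := hh.reflect_lt hlt
  have h2 : i < j := by simpa using h1
  have h3 : ((i : ℕ) : ℝ) ≤ ((j : ℕ) : ℝ) := by exact_mod_cast h2.le
  show (n : ℝ) - ((j : ℕ) : ℝ) ≤ (n : ℝ) - ((i : ℕ) : ℝ)
  linarith

lemma cost_le_aux {n : ℕ} (P : Finset (Fin n)) (w : Fin n → ℝ) (ρ σ : Equiv.Perm (Fin n))
    (h : AntivaryOn (fun i : Fin n => (n : ℝ) - ((i : ℕ) : ℝ)) (fun i => w (ρ i)) (P : Set (Fin n)))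
    (hs : ∀ i, i ∉ P → σ i = ρ i) : cost n w ρ ≤ cost n w σ := by
  have key := h.sum_mul_le_sum_mul_comp_perm (σ := σ.trans ρ.symm) (by
    intro x hx
    by_contra hxP
    apply hx
    simp [hs x hxP])
  simp only [Equiv.trans_apply, Equiv.apply_symm_apply] at key
  unfold cost
  rw [← Finset.sum_add_sum_compl P, ← Finset.sum_add_sum_compl P
    (fun i => ((n : ℝ) - ((i : ℕ) : ℝ)) * w (σ i))]
  refine add_le_add key (le_of_eq (Finset.sum_congr rfl fun i hi => ?_))
  rw [hs i (by simpa using hi)]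

/-- Theorem 1 / Algorithm 1: the value `f(M)` is computed by
the sorting procedure: sort the `p`- and `q`-values of the jobs outside `M`
separately in non-decreasing order and add them componentwise to get `d`;
merge these with the joint processing times `p j + q j` of the jobs in `M`
and sort non-decreasingly to obtain `e`; then `f(M) = ∑ i (n+1-i)·e_i`. -/
theorem stmt_0 (n : ℕ) (hn : 1 ≤ n) (p q : Fin n → ℝ)
    (hp : ∀ j, 0 ≤ p j) (hq : ∀ j, 0 ≤ q j) (M : Finset (Fin n))
    (a b d : List ℝ) (e : List ℝ)
    (ha : a = (Mᶜ.val.map p).sort (· ≤ ·))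
    (hb : b = (Mᶜ.val.map q).sort (· ≤ ·))
    (hd : d = List.zipWith (· + ·) a b)
    (he : e = ((M.val.map (fun j => p j + q j)) + (↑d : Multiset ℝ)).sort (· ≤ ·)) :
    fval n p q M = ∑ i ∈ Finset.range n, ((n : ℝ) - (i : ℝ)) * e.getD i 0 := by
  classical
  obtain ⟨u, hu, hua⟩ := exists_sort_enum Mᶜ rfl p
  obtain ⟨v, hv, hvb⟩ := exists_sort_enum Mᶜ rfl q
  let π : Equiv.Perm (Fin n) := Equiv.Perm.ofSubtype (u.symm.trans v)
  have hπu : ∀ r, π (u r) = v r := by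
    intro r
    rw [Equiv.Perm.ofSubtype_apply_coe]
    simp
  have hπM : ∀ j ∈ M, π j = j := by
    intro j hj
    exact Equiv.Perm.ofSubtype_apply_of_not_mem _ (by simpa using hj)
  let c : Fin n → ℝ := fun j => p j + q (π j)
  have hcost : ∀ ρ : Equiv.Perm (Fin n),
      cost n c ρ = cost n p ρ + cost n q (ρ.trans π) := by
    intro ρ
    simp only [cost, c, Equiv.trans_apply, ← Finset.sum_add_distrib, mul_add]
  -- the multiset
  have hmul : (M.val.map (fun j => p j + q j)) + (↑d : Multiset ℝ)
      = (univ : Finset (Fin n)).val.map c := by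
    have h1 : (↑d : Multiset ℝ) = Mᶜ.val.map c := by
      have hd' : d = List.ofFn (fun r => c (u r)) := by
        rw [hd, ha, hb, hua, hvb]
        apply List.ext_getElem
        · simp
        · intro i h1 h2
          simp [c, hπu]
      rw [hd', ← Fin.univ_val_map]
      have h2 : Mᶜ.val.map c = (univ : Finset {x // x ∈ Mᶜ}).val.map (fun x : {x // x ∈ Mᶜ} => c x) := by
        rw [Finset.univ_eq_attach, Finset.attach_val]
        exact (Multiset.attach_map_val' Mᶜ.val c).symm
      rw [h2, ← Finset.map_univ_equiv u, Finset.map_val, Multiset.map_map]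
      rfl
    have h3 : (M.val.map (fun j => p j + q j)) = M.val.map c := by
      apply Multiset.map_congr rfl
      intro j hj
      simp only [c]
      rw [hπM j hj]
    rw [h1, h3, ← Multiset.map_add, ← Finset.disjUnion_val M Mᶜ disjoint_compl_right,
      Finset.disjUnion_eq_union, Finset.union_compl]
  obtain ⟨s, hs, hse⟩ := exists_sort_enum (univ : Finset (Fin n)) (Finset.card_fin n) c
  let σ₀ : Equiv.Perm (Fin n) := s.trans (Equiv.subtypeUnivEquiv (fun x => mem_univ x))
  have hσ₀ : ∀ i, σ₀ i = (s i : Fin n) := fun i => rfl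
  have hsum : ∑ i ∈ Finset.range n, ((n : ℝ) - (i : ℝ)) * e.getD i 0 = cost n c σ₀ := by
    rw [he, hmul, hse, Finset.sum_range]
    unfold cost
    refine Finset.sum_congr rfl fun i _ => ?_
    simp [hσ₀]
  rw [hsum]
  have hmin : ∀ ρ, cost n c σ₀ ≤ cost n c ρ := by
    intro ρ
    refine cost_le_aux univ c σ₀ ρ ?_ (by simp)
    intro i _ j _ hlt
    have h2 : i < j := hs.reflect_lt hlt
    have h3 : ((i : ℕ) : ℝ) ≤ ((j : ℕ) : ℝ) := by exact_mod_cast h2.le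
    show (n : ℝ) - ((j : ℕ) : ℝ) ≤ (n : ℝ) - ((i : ℕ) : ℝ)
    linarith
  unfold fval
  refine IsLeast.csInf_eq ⟨⟨σ₀, σ₀.trans π, ?_, hcost σ₀⟩, ?_⟩
  · intro j hj
    rw [Equiv.eq_symm_apply, Equiv.trans_apply, Equiv.apply_symm_apply, hπM j hj]
  · rintro x ⟨σ, τ, hστ, rfl⟩
    have hτ : ∀ i, σ i ∈ M → τ i = σ i := by
      intro i hi
      have := hστ _ hi
      rw [Equiv.symm_apply_apply, Equiv.eq_symm_apply] at this
      exact this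
    let P : Finset (Fin n) := univ.filter (fun i => σ i ∈ Mᶜ)
    have hP : ∀ i, i ∈ P ↔ σ i ∈ Mᶜ := by intro i; simp [P]
    let σP : {x // x ∈ P} ≃ {x // x ∈ Mᶜ} := σ.subtypeEquiv hP
    have hcard : P.card = Mᶜ.card := by
      have := Fintype.card_congr σP
      simpa only [Fintype.card_coe] using this
    let of := P.orderIsoOfFin hcard
    let κ : Equiv.Perm {x // x ∈ Mᶜ} := σP.symm.trans (of.symm.toEquiv.trans u)
    let ρ : Equiv.Perm (Fin n) := σ.trans (Equiv.Perm.ofSubtype κ)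
    have hρP : ∀ i (hi : i ∈ P), ρ i = u (of.symm ⟨i, hi⟩) := by
      intro i hi
      have h1 : ρ i = Equiv.Perm.ofSubtype κ ((σP ⟨i, hi⟩ : {x // x ∈ Mᶜ}) : Fin n) := rfl
      rw [h1, Equiv.Perm.ofSubtype_apply_coe]
      simp [κ]
    have hρM : ∀ i, i ∉ P → ρ i = σ i := by
      intro i hi
      rw [hP] at hi
      exact Equiv.Perm.ofSubtype_apply_of_not_mem _ hi
    refine (hmin ρ).trans ?_
    rw [hcost ρ]
    refine add_le_add (cost_le_aux P p ρ σ ?_ fun i hi => (hρM i hi).symm)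
      (cost_le_aux P q _ τ ?_ ?_)
    · refine antivary_aux P of _ hu _ fun i hi => ?_
      rw [hρP i hi]
    · refine antivary_aux P of _ hv _ fun i hi => ?_
      rw [Equiv.trans_apply, hρP i hi, hπu]
    · intro i hi
      have hiM : σ i ∈ M := by
        rw [hP] at hi
        simpa using hi
      rw [Equiv.trans_apply, hρM i hi, hπM _ hiM, hτ i hiM]
end

section
/- Let n ≥ 1 and let p, q : {1,…,n} → ℝ≥0. Then UB ≤ 2·LB, where UB = min_σ C_{p+q}(σ) is the optimal value when the first-stage and second-stage schedules are forced to coincide, and LB = (min_σ C_p(σ)) + (min_τ C_q(τ)) is the optimal value when the two schedules are chosen independently. -/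
open Finset

/-- At most `m` jobs have position weight at most `m`. -/
lemma card_weight_le (n : ℕ) (σ : Equiv.Perm (Fin n)) (m : ℕ) :
    (Finset.univ.filter (fun j : Fin n => n - (σ.symm j : ℕ) ≤ m)).card ≤ m := by
  have h : (Finset.univ.filter (fun j : Fin n => n - (σ.symm j : ℕ) ≤ m)).card
      ≤ (Finset.Icc 1 m).card := by
    apply Finset.card_le_card_of_injOn (fun j => n - (σ.symm j : ℕ))
    · intro j hj
      have h1 := (σ.symm j).isLt
      simp at hj ⊢
      omega
    · intro x _ y _ hxy
      have h1 := (σ.symm x).isLt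
      have h2 := (σ.symm y).isLt
      simp only at hxy
      apply σ.symm.injective
      apply Fin.ext
      omega
  simpa using h

lemma cost_eq (n : ℕ) (w : Fin n → ℝ) (σ : Equiv.Perm (Fin n)) :
    cost n w σ = ∑ j, ((n - (σ.symm j : ℕ) : ℕ) : ℝ) * w j := by
  unfold cost
  rw [← Equiv.sum_comp σ (fun j => ((n - (σ.symm j : ℕ) : ℕ) : ℝ) * w j)]
  apply Finset.sum_congr rfl
  intro i _
  rw [Equiv.symm_apply_apply, Nat.cast_sub i.isLt.le]

/-- A schedule whose position weights are at most twice those of `σ` and of `τ`. -/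
lemma exists_common (n : ℕ) (σ τ : Equiv.Perm (Fin n)) :
    ∃ ρ : Equiv.Perm (Fin n), ∀ j, n - (ρ.symm j : ℕ) ≤ 2 * (n - (σ.symm j : ℕ)) ∧
      n - (ρ.symm j : ℕ) ≤ 2 * (n - (τ.symm j : ℕ)) := by
  let f : Fin n → ℕ := fun j => min (n - (σ.symm j : ℕ)) (n - (τ.symm j : ℕ))
  let s := Tuple.sort f
  have hs : Monotone (f ∘ s) := Tuple.monotone_sort f
  have key : ∀ k : Fin n, (k : ℕ) + 1 ≤ 2 * f (s k) := by
    intro k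
    have h1 : ((Finset.Iic k).image s).card = k + 1 := by
      rw [Finset.card_image_of_injective _ s.injective, Fin.card_Iic]
    have h2 : (Finset.Iic k).image s ⊆
        (Finset.univ.filter (fun j : Fin n => n - (σ.symm j : ℕ) ≤ f (s k))) ∪
        (Finset.univ.filter (fun j : Fin n => n - (τ.symm j : ℕ) ≤ f (s k))) := by
      intro x hx
      obtain ⟨l, hl, rfl⟩ := Finset.mem_image.1 hx
      have h3 : f (s l) ≤ f (s k) := hs (Finset.mem_Iic.1 hl)
      rw [Finset.mem_union, Finset.mem_filter, Finset.mem_filter]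
      rcases min_le_iff.1 h3 with h | h
      · exact Or.inl ⟨Finset.mem_univ _, h⟩
      · exact Or.inr ⟨Finset.mem_univ _, h⟩
    have h3 := (Finset.card_le_card h2).trans (Finset.card_union_le _ _)
    have h4 := card_weight_le n σ (f (s k))
    have h5 := card_weight_le n τ (f (s k))
    omega
  refine ⟨Fin.revPerm.trans s, fun j => ?_⟩
  have hk := key (s.symm j)
  rw [Equiv.apply_symm_apply] at hk
  have hl := (s.symm j).isLt
  have hr : (((Fin.revPerm.trans s).symm j : Fin n) : ℕ) = n - ((s.symm j : ℕ) + 1) := by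
    simp [Equiv.symm_trans_apply, Fin.val_rev]
  have hf1 : f j ≤ n - (σ.symm j : ℕ) := min_le_left _ _
  have hf2 : f j ≤ n - (τ.symm j : ℕ) := min_le_right _ _
  rw [hr]
  omega

lemma finite_costs (n : ℕ) (w : Fin n → ℝ) :
    {v : ℝ | ∃ σ : Equiv.Perm (Fin n), v = cost n w σ}.Finite := by
  apply (Set.finite_range (cost n w)).subset
  rintro v ⟨σ, rfl⟩
  exact ⟨σ, rfl⟩

lemma exists_opt (n : ℕ) (w : Fin n → ℝ) : ∃ σ : Equiv.Perm (Fin n),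
    sInf {v : ℝ | ∃ σ : Equiv.Perm (Fin n), v = cost n w σ} = cost n w σ :=
  Set.Nonempty.csInf_mem (s := {v : ℝ | ∃ σ : Equiv.Perm (Fin n), v = cost n w σ})
    ⟨_, 1, rfl⟩ (finite_costs n w)

/-- the identical-schedules optimum `UB` is at most twice the
independent-schedules optimum `LB`. -/
theorem stmt_2 (n : ℕ) (hn : 1 ≤ n) (p q : Fin n → ℝ)
    (hp : ∀ j, 0 ≤ p j) (hq : ∀ j, 0 ≤ q j) :
    UBval n p q ≤ 2 * LBval n p q := by
  obtain ⟨σ, hσ⟩ := exists_opt n p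
  obtain ⟨τ, hτ⟩ := exists_opt n q
  obtain ⟨ρ, hρ⟩ := exists_common n σ τ
  unfold LBval
  rw [hσ, hτ]
  have h1 : UBval n p q ≤ cost n (fun j => p j + q j) ρ :=
    csInf_le (finite_costs n _).bddBelow ⟨ρ, rfl⟩
  refine h1.trans ?_
  rw [cost_eq, cost_eq, cost_eq, ← Finset.sum_add_distrib, Finset.mul_sum]
  apply Finset.sum_le_sum
  intro j _
  obtain ⟨ha, hb⟩ := hρ j
  have ha' : ((n - (ρ.symm j : ℕ) : ℕ) : ℝ) ≤ 2 * ((n - (σ.symm j : ℕ) : ℕ) : ℝ) := by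
    exact_mod_cast ha
  have hb' : ((n - (ρ.symm j : ℕ) : ℕ) : ℝ) ≤ 2 * ((n - (τ.symm j : ℕ) : ℕ) : ℝ) := by
    exact_mod_cast hb
  have e1 := mul_le_mul_of_nonneg_right ha' (hp j)
  have e2 := mul_le_mul_of_nonneg_right hb' (hq j)
  linarith
end

section
/- Let n ≥ 1, let p, q : {1,…,n} → ℝ≥0, and let 0 ≤ Δ ≤ n. Then OPT(Δ) ≤ f({1,…,n}) ≤ 2·OPT(Δ); that is, the solution of the problem in which the first-stage and second-stage schedules are forced to be identical (UB-SMSP) is a 2-approximation to RecSMSP. -/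
open Finset

theorem sched_exists (n : ℕ) (σ τ : Equiv.Perm (Fin n)) :
    ∃ π : Equiv.Perm (Fin n), ∀ i : Fin n,
      2 * (σ.symm (π i) : ℕ) ≤ n + i ∧ 2 * (τ.symm (π i) : ℕ) ≤ n + i := by
  classical
  let m : Fin n → Fin n := fun j => max (σ.symm j) (τ.symm j)
  let π := Tuple.sort m
  have hmono : Monotone (m ∘ π) := Tuple.monotone_sort m
  refine ⟨π, fun i => ?_⟩
  have key : 2 * (m (π i) : ℕ) ≤ n + i := by
    set k := m (π i) with hk
    have h1 : (Finset.univ : Finset (Fin n)) ⊆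
        (Finset.Iio i).image π ∪ ((Finset.Ici k).image σ ∪ (Finset.Ici k).image τ) := by
      intro j _
      by_cases hj : m j < k
      · apply Finset.mem_union_left
        refine Finset.mem_image.2 ⟨π.symm j, ?_, by simp⟩
        rw [Finset.mem_Iio]
        by_contra hc
        have h := hmono (not_lt.1 hc)
        simp only [Function.comp, Equiv.apply_symm_apply] at h
        exact absurd hj (not_lt.2 h)
      · apply Finset.mem_union_right
        rcases le_max_iff.1 (not_lt.1 hj) with h | h
        · exact Finset.mem_union_left _ (Finset.mem_image.2 ⟨σ.symm j, by simpa using h, by simp⟩)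
        · exact Finset.mem_union_right _ (Finset.mem_image.2 ⟨τ.symm j, by simpa using h, by simp⟩)
    have h2 := Finset.card_le_card h1
    have h3 := Finset.card_union_le ((Finset.Iio i).image π)
      ((Finset.Ici k).image σ ∪ (Finset.Ici k).image τ)
    have h4 := Finset.card_union_le ((Finset.Ici k).image σ) ((Finset.Ici k).image τ)
    have h5 : ((Finset.Iio i).image π).card = i := by
      rw [Finset.card_image_of_injective _ π.injective, Fin.card_Iio]
    have h6 : ((Finset.Ici k).image σ).card = n - k := by
      rw [Finset.card_image_of_injective _ σ.injective, Fin.card_Ici]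
    have h7 : ((Finset.Ici k).image τ).card = n - k := by
      rw [Finset.card_image_of_injective _ τ.injective, Fin.card_Ici]
    rw [Finset.card_univ, Fintype.card_fin] at h2
    have := k.isLt
    omega
  have ha : (σ.symm (π i) : ℕ) ≤ m (π i) := Fin.le_def.1 (le_max_left _ _)
  have hb : (τ.symm (π i) : ℕ) ≤ m (π i) := Fin.le_def.1 (le_max_right _ _)
  omega

theorem cost_le_two (n : ℕ) (w : Fin n → ℝ) (hw : ∀ j, 0 ≤ w j) (σ π : Equiv.Perm (Fin n))
    (h : ∀ i : Fin n, 2 * (σ.symm (π i) : ℕ) ≤ n + i) : cost n w π ≤ 2 * cost n w σ := by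
  have e : cost n w σ = ∑ i : Fin n, ((n : ℝ) - ((σ.symm (π i) : ℕ) : ℝ)) * w (π i) := by
    unfold cost
    rw [← Equiv.sum_comp (π.trans σ.symm)]
    simp
  rw [e, cost, Finset.mul_sum]
  refine Finset.sum_le_sum fun i _ => ?_
  have h' : (2 : ℝ) * ((σ.symm (π i) : ℕ) : ℝ) ≤ n + (i : ℕ) := by exact_mod_cast h i
  rw [← mul_assoc]
  exact mul_le_mul_of_nonneg_right (by linarith) (hw _)

theorem cost_nonneg' (n : ℕ) (w : Fin n → ℝ) (hw : ∀ j, 0 ≤ w j) (σ : Equiv.Perm (Fin n)) :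
    0 ≤ cost n w σ := by
  refine Finset.sum_nonneg fun i _ => mul_nonneg ?_ (hw _)
  have : ((i : ℕ) : ℝ) ≤ n := by exact_mod_cast i.isLt.le
  linarith

/-- Theorem 2: the solution of (UB-SMSP), i.e. `f({1,…,n})`,
is a 2-approximation to (RecSMSP): `OPT(Δ) ≤ f(N) ≤ 2·OPT(Δ)`. -/
theorem stmt_3 (n : ℕ) (hn : 1 ≤ n) (p q : Fin n → ℝ)
    (hp : ∀ j, 0 ≤ p j) (hq : ∀ j, 0 ≤ q j) (Δ : ℕ) (hΔ : Δ ≤ n) :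
    OPT n p q Δ ≤ fval n p q Finset.univ ∧
    fval n p q Finset.univ ≤ 2 * OPT n p q Δ := by
  constructor
  · refine csInf_le_csInf ⟨0, ?_⟩ ⟨_, 1, 1, fun _ _ => rfl, rfl⟩ ?_
    · rintro v ⟨σ, τ, -, rfl⟩
      exact add_nonneg (cost_nonneg' n p hp σ) (cost_nonneg' n q hq τ)
    · rintro v ⟨σ, τ, h, rfl⟩
      refine ⟨σ, τ, ?_, rfl⟩
      rw [Finset.filter_true_of_mem h, Finset.card_univ, Fintype.card_fin]
      exact hΔ
  · have : fval n p q Finset.univ / 2 ≤ OPT n p q Δ := by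
      refine le_csInf ⟨_, 1, 1, by simpa using hΔ, rfl⟩ ?_
      rintro v ⟨σ, τ, -, rfl⟩
      obtain ⟨π, hπ⟩ := sched_exists n σ τ
      have h1 := cost_le_two n p hp σ π fun i => (hπ i).1
      have h2 := cost_le_two n q hq τ π fun i => (hπ i).2
      have h3 : fval n p q Finset.univ ≤ cost n p π + cost n q π := by
        refine csInf_le ⟨0, ?_⟩ ⟨π, π, fun _ _ => rfl, rfl⟩
        rintro v ⟨σ, τ, -, rfl⟩
        exact add_nonneg (cost_nonneg' n p hp σ) (cost_nonneg' n q hq τ)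
      linarith
    linarith
end

section
/- Let n ≥ 1 and let p, q : {1,…,n} → ℝ≥0 be non-decreasing, i.e. p₁ ≤ p₂ ≤ … ≤ p_n and q₁ ≤ q₂ ≤ … ≤ q_n. For a bijection π of {1,…,n}, define UB(π) = min_σ ∑_{i=1}^n (n+1−i)·(p(σ(i)) + q(π(σ(i)))), the optimal identical-schedules cost of the instance in which job j has first-stage time p_j and second-stage time q_{π(j)}. Let ρ be the reversal permutation ρ(j) = n+1−j. Then for every bijection π of {1,…,n}, UB(π) ≤ UB(ρ); i.e. among all matchings of the sorted first-stage times to the sorted second-stage times, the fully-crossed matching maximises UB. -/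
open Finset

/-- For sorted processing times `p`, `q` and a matching `π` (job `j` has
first-stage time `p j` and second-stage time `q (π j)`), the value of the
identical-schedules problem (UB-SMSP) of the corresponding instance. -/
noncomputable def UBmatch (n : ℕ) (p q : Fin n → ℝ) (π : Equiv.Perm (Fin n)) : ℝ :=
  sInf {v : ℝ | ∃ σ : Equiv.Perm (Fin n),
    v = ∑ i : Fin n, ((n : ℝ) - ((i : ℕ) : ℝ)) * (p (σ i) + q (π (σ i)))}

lemma swap_sum {n : ℕ} (c f : Fin n → ℝ) (σ : Equiv.Perm (Fin n)) (i j : Fin n) (hij : i ≠ j) :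
    ∑ x, c x * f (Equiv.swap i j (σ x)) =
      ∑ x, c x * f (σ x) + (c (σ.symm i) - c (σ.symm j)) * (f j - f i) := by
  have h1 : ∑ x, c x * f (Equiv.swap i j (σ x)) - ∑ x, c x * f (σ x)
      = ∑ k, c (σ.symm k) * (f (Equiv.swap i j k) - f k) := by
    rw [← Finset.sum_sub_distrib, ← Equiv.sum_comp σ (fun k => c (σ.symm k) * (f (Equiv.swap i j k) - f k))]
    refine Finset.sum_congr rfl fun x _ => ?_
    simp only [Equiv.symm_apply_apply]
    ring
  have h2 : ∑ k, c (σ.symm k) * (f (Equiv.swap i j k) - f k)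
      = ∑ k ∈ ({i, j} : Finset (Fin n)), c (σ.symm k) * (f (Equiv.swap i j k) - f k) := by
    symm
    apply Finset.sum_subset (Finset.subset_univ _)
    intro k _ hk
    simp only [Finset.mem_insert, Finset.mem_singleton, not_or] at hk
    rw [Equiv.swap_apply_of_ne_of_ne hk.1 hk.2]
    ring
  rw [Finset.sum_pair hij, Equiv.swap_apply_left, Equiv.swap_apply_right] at h2
  linarith

lemma UB_swap {n : ℕ} (p q : Fin n → ℝ) (hp : Monotone p) (hq : Monotone q)
    (π : Equiv.Perm (Fin n)) (i j : Fin n) (hij : i < j) (hπ : π i < π j) :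
    UBmatch n p q π ≤ UBmatch n p q ((Equiv.swap i j).trans π) := by
  unfold UBmatch
  refine le_csInf ?_ ?_
  · exact ⟨_, 1, rfl⟩
  rintro v ⟨σ, rfl⟩
  have bdd : BddBelow {v : ℝ | ∃ σ : Equiv.Perm (Fin n),
      v = ∑ i : Fin n, ((n : ℝ) - ((i : ℕ) : ℝ)) * (p (σ i) + q (π (σ i)))} := by
    apply Set.Finite.bddBelow
    refine (Set.finite_range fun σ : Equiv.Perm (Fin n) =>
      ∑ i : Fin n, ((n : ℝ) - ((i : ℕ) : ℝ)) * (p (σ i) + q (π (σ i)))).subset ?_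
    rintro v ⟨σ, rfl⟩
    exact ⟨σ, rfl⟩
  have e1 := swap_sum (fun x : Fin n => (n : ℝ) - ((x : ℕ) : ℝ)) (fun k => q (π k)) σ i j hij.ne
  have e2 := swap_sum (fun x : Fin n => (n : ℝ) - ((x : ℕ) : ℝ)) p σ i j hij.ne
  have hd := hq hπ.le
  have hd2 := hp hij.le
  simp only [Equiv.trans_apply]
  rcases le_total ((n : ℝ) - ((σ.symm j : ℕ) : ℝ)) ((n : ℝ) - ((σ.symm i : ℕ) : ℝ)) with h | h
  · refine (csInf_le bdd ⟨σ, rfl⟩).trans ?_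
    simp only [mul_add, Finset.sum_add_distrib]
    have := mul_nonneg (sub_nonneg.2 h) (sub_nonneg.2 hd)
    linarith
  · refine (csInf_le bdd ⟨σ.trans (Equiv.swap i j), rfl⟩).trans ?_
    simp only [mul_add, Finset.sum_add_distrib, Equiv.trans_apply]
    have := mul_nonneg (sub_nonneg.2 h) (sub_nonneg.2 hd2)
    linarith

lemma eq_rev {n : ℕ} (π : Equiv.Perm (Fin n)) (h : ∀ i j, i < j → π j ≤ π i) :
    π = Fin.revPerm := by
  have hs : StrictMono (fun k => Fin.rev (π k)) := by
    intro i j hij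
    have := lt_of_le_of_ne (h i j hij) (fun e => hij.ne' (π.injective e))
    exact Fin.rev_lt_rev.2 this
  have hid : (fun k => Fin.rev (π k)) = id :=
    (StrictMono.range_inj hs strictMono_id).1 (by
      rw [Set.range_id]
      exact (Fin.rev_surjective.comp π.surjective).range_eq)
  ext k
  have := congrFun hid k
  simp only [id] at this
  rw [Fin.revPerm_apply, ← Fin.rev_eq_iff.1 this]

/-- Lemma 1: among all matchings of sorted first-stage times
to sorted second-stage times, the fully-crossed matching (the reversal
permutation) maximises the identical-schedules value `UB`. -/
theorem stmt_4 (n : ℕ) (hn : 1 ≤ n) (p q : Fin n → ℝ)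
    (hp0 : ∀ j, 0 ≤ p j) (hq0 : ∀ j, 0 ≤ q j)
    (hp : Monotone p) (hq : Monotone q) (π : Equiv.Perm (Fin n)) :
    UBmatch n p q π ≤ UBmatch n p q (Fin.revPerm) := by
  by_contra hcon
  obtain ⟨τ, hτ, hmin⟩ := Set.exists_min_image
    {τ : Equiv.Perm (Fin n) | ¬ UBmatch n p q τ ≤ UBmatch n p q Fin.revPerm}
    (fun τ => ∑ k : Fin n, ((k : ℕ) : ℝ) * ((τ k : ℕ) : ℝ)) (Set.toFinite _) ⟨π, hcon⟩
  by_cases hA : ∀ i j, i < j → τ j ≤ τ i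
  · exact hτ (by rw [eq_rev τ hA])
  · push Not at hA
    obtain ⟨i, j, hij, hlt⟩ := hA
    have h1 := UB_swap p q hp hq τ i j hij hlt
    have h2 := hmin ((Equiv.swap i j).trans τ) (fun h => hτ (h1.trans h))
    have h3 := swap_sum (fun x : Fin n => ((x : ℕ) : ℝ)) (fun k => ((τ k : ℕ) : ℝ)) 1 i j hij.ne
    simp only [Equiv.trans_apply] at h2
    simp only [Equiv.Perm.one_apply, Equiv.Perm.one_symm] at h3
    have a : ((i : ℕ) : ℝ) < ((j : ℕ) : ℝ) := by exact_mod_cast hij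
    have b : ((τ i : ℕ) : ℝ) < ((τ j : ℕ) : ℝ) := by exact_mod_cast hlt
    have := mul_pos (sub_pos.2 a) (sub_pos.2 b)
    linarith
end

section
/- Let n ≥ 2 and let p, q : {1,…,n} → ℝ≥0. Let j₁ ≠ j₂ be two jobs with p(j₁) ≤ p(j₂) and q(j₁) ≤ q(j₂), and let q' = q ∘ (j₁ j₂) be obtained from q by exchanging the second-stage times of jobs j₁ and j₂ (so job j₁ gets q(j₂) and job j₂ gets q(j₁)). Then min_σ C_{p+q}(σ) ≤ min_σ C_{p+q'}(σ); i.e. crossing the two jobs does not decrease the optimal identical-schedules cost UB. -/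
open Finset

/-- crossing two jobs (the job with both smaller processing
times receives the larger second-stage time and vice versa) does not decrease
the optimal identical-schedules cost `UB`. -/
theorem stmt_5 (n : ℕ) (hn : 2 ≤ n) (p q : Fin n → ℝ)
    (hp : ∀ j, 0 ≤ p j) (hq : ∀ j, 0 ≤ q j)
    (j₁ j₂ : Fin n) (hne : j₁ ≠ j₂) (h1 : p j₁ ≤ p j₂) (h2 : q j₁ ≤ q j₂) :
    UBval n p q ≤ UBval n p (q ∘ (Equiv.swap j₁ j₂)) := by
  have key : ∀ (w : Fin n → ℝ) (σ : Equiv.Perm (Fin n)),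
      cost n w σ = ∑ j : Fin n, ((n : ℝ) - ((σ.symm j : ℕ) : ℝ)) * w j := by
    intro w σ
    unfold cost
    rw [← Equiv.sum_comp σ (fun j : Fin n => ((n : ℝ) - ((σ.symm j : ℕ) : ℝ)) * w j)]
    simp
  have hne' : j₂ ≠ j₁ := hne.symm
  unfold UBval
  refine le_csInf (Set.nonempty_of_mem (⟨Equiv.refl _, rfl⟩)) ?_
  rintro v ⟨σ, rfl⟩
  have bdd : BddBelow {v : ℝ | ∃ σ : Equiv.Perm (Fin n),
      v = cost n (fun j => p j + q j) σ} := by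
    refine ⟨0, ?_⟩
    rintro v ⟨σ, rfl⟩
    unfold cost
    refine Finset.sum_nonneg fun i _ => mul_nonneg ?_ (add_nonneg (hp _) (hq _))
    have : ((i : ℕ) : ℝ) ≤ n := by exact_mod_cast i.2.le
    linarith
  rcases le_total ((σ.symm j₁ : ℕ) : ℝ) ((σ.symm j₂ : ℕ) : ℝ) with h | h
  · refine (csInf_le bdd ⟨σ, rfl⟩).trans ?_
    rw [key, key, ← sub_nonneg, ← Finset.sum_sub_distrib, Fintype.sum_eq_add j₁ j₂ hne]
    · simp only [Function.comp, Equiv.swap_apply_left, Equiv.swap_apply_right]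
      nlinarith [mul_nonneg (sub_nonneg.2 h) (sub_nonneg.2 h2)]
    · rintro x ⟨hx1, hx2⟩
      simp [Equiv.swap_apply_of_ne_of_ne hx1 hx2]
  · refine (csInf_le bdd ⟨σ.trans (Equiv.swap j₁ j₂), rfl⟩).trans ?_
    rw [key, key, ← sub_nonneg, ← Finset.sum_sub_distrib, Fintype.sum_eq_add j₁ j₂ hne]
    · simp only [Function.comp, Equiv.symm_trans_apply, Equiv.symm_swap,
        Equiv.swap_apply_left, Equiv.swap_apply_right]
      nlinarith [mul_nonneg (sub_nonneg.2 h) (sub_nonneg.2 h1)]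
    · rintro x ⟨hx1, hx2⟩
      simp [Equiv.swap_apply_of_ne_of_ne hx1 hx2]
end

section
/- For every n ≥ 1 there exists a bijection τ of {1,…,n} such that for every j ∈ {1,…,n}, τ(j) ≥ max(2j − n − 1, n + 1 − 2j). Such a bijection is obtained by assigning the positions n, n−1, …, 1 in decreasing order to the indices j, alternating between the unassigned index with the largest value and the unassigned index with the smallest value. -/
open Finset

/-- for every `n ≥ 1` there is a bijection `τ` of `{1,…,n}`
(here modelled on `Fin n`, with `j`, `τ j` 0-indexed, so the 1-indexed index
is `j + 1` and the 1-indexed position is `τ j + 1`) satisfying the dual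
feasibility condition (†): `τ(j) ≥ max(2j − n − 1, n + 1 − 2j)`. -/
theorem stmt_8 (n : ℕ) (hn : 1 ≤ n) :
    ∃ τ : Equiv.Perm (Fin n), ∀ j : Fin n,
      max (2 * ((j : ℤ) + 1) - n - 1) ((n : ℤ) + 1 - 2 * ((j : ℤ) + 1))
        ≤ (τ j : ℤ) + 1 := by
  let f : Fin n → Fin n := fun j =>
    if h : n ≤ 2 * (j : ℕ) + 1 then ⟨2 * (j : ℕ) + 1 - n, by have := j.2; omega⟩
    else ⟨n - 2 - 2 * (j : ℕ), by omega⟩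
  have hf : ∀ j : Fin n, ((f j : Fin n) : ℕ) =
      if n ≤ 2 * (j : ℕ) + 1 then 2 * (j : ℕ) + 1 - n else n - 2 - 2 * (j : ℕ) := by
    intro j
    by_cases h : n ≤ 2 * (j : ℕ) + 1 <;> simp [f, h]
  have hinj : Function.Injective f := by
    intro a b hab
    have h1 : ((f a : Fin n) : ℕ) = f b := by rw [hab]
    rw [hf, hf] at h1
    apply Fin.ext
    have := a.2
    have := b.2
    split_ifs at h1 <;> omega
  refine ⟨Equiv.ofBijective f (Finite.injective_iff_bijective.mp hinj), fun j => ?_⟩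
  have h := hf j
  have hj := j.2
  rw [Equiv.ofBijective_apply]
  apply max_le <;> split_ifs at h <;> omega
end

section
/- Let n ≥ 2 be even and consider the fully-crossed 0-1 instance on n jobs: job j has first-stage time p(j) = 0 and second-stage time q(j) = 1 for j ≤ n/2, and p(j) = 1, q(j) = 0 for j > n/2. Then UB = min_σ C_{p+q}(σ) = n(n+1)/2, LB = (min_σ C_p(σ)) + (min_τ C_q(τ)) = n(n/2+1)/2, and hence UB/LB = (2n+2)/(n+2). -/
open Finset

theorem aux_sum (a : ℝ) (k : ℕ) :
    ∑ x ∈ Finset.range k, (a - (x : ℝ)) = a * k - k * (k - 1) / 2 := by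
  induction k with
  | zero => simp
  | succ k ih => rw [Finset.sum_range_succ, ih]; push_cast; ring

theorem aux_z1 (m : ℕ) :
    ∑ i : Fin (m + m), (if (i : ℕ) < m then (0 : ℝ) else 1) = m := by
  rw [Fin.sum_univ_eq_sum_range (fun i => if i < m then (0 : ℝ) else 1) (m + m),
    Finset.sum_range_add]
  rw [Finset.sum_eq_zero (fun x hx => by simp [Finset.mem_range.1 hx])]
  simp

theorem aux_z2 (m : ℕ) :
    ∑ i : Fin (m + m), (((m + m : ℕ) : ℝ) - ((i : ℕ) : ℝ)) *
      (if (i : ℕ) < m then (0 : ℝ) else 1) = m * (m + 1) / 2 := by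
  rw [Fin.sum_univ_eq_sum_range
    (fun i => (((m + m : ℕ) : ℝ) - (i : ℝ)) * (if i < m then (0 : ℝ) else 1)) (m + m),
    Finset.sum_range_add]
  rw [Finset.sum_eq_zero (fun x hx => by simp [Finset.mem_range.1 hx])]
  have h : ∀ x ∈ Finset.range m, (((m + m : ℕ) : ℝ) - ((m + x : ℕ) : ℝ)) *
      (if m + x < m then (0 : ℝ) else 1) = (m : ℝ) - x := by
    intro x _
    rw [if_neg (by omega)]
    push_cast
    ring
  rw [Finset.sum_congr rfl h, aux_sum]
  ring

theorem aux_min (m : ℕ) (w : Fin (m + m) → ℝ) (h0 : ∀ j, 0 ≤ w j) (h1 : ∀ j, w j ≤ 1)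
    (hs : ∑ j, w j = m) (σ₀ : Equiv.Perm (Fin (m + m)))
    (hσ : ∀ i, w (σ₀ i) = if (i : ℕ) < m then (0 : ℝ) else 1) :
    sInf {v : ℝ | ∃ σ : Equiv.Perm (Fin (m + m)), v = cost (m + m) w σ} =
      m * (m + 1) / 2 := by
  apply IsLeast.csInf_eq
  constructor
  · refine ⟨σ₀, ?_⟩
    rw [cost, ← aux_z2 m]
    exact Finset.sum_congr rfl (fun i _ => by rw [hσ])
  · rintro v ⟨σ, rfl⟩
    have hsσ : ∑ i, w (σ i) = m := by rw [Equiv.sum_comp σ w, hs]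
    have key : ∑ i : Fin (m + m), ((((m + m : ℕ) : ℝ) - ((i : ℕ) : ℝ)) *
        (if (i : ℕ) < m then (0 : ℝ) else 1) +
        m * (w (σ i) - (if (i : ℕ) < m then (0 : ℝ) else 1))) ≤ cost (m + m) w σ := by
      apply Finset.sum_le_sum
      intro i _
      have a0 := h0 (σ i)
      have a1 := h1 (σ i)
      push_cast
      split_ifs with h
      · have : ((i : ℕ) : ℝ) < m := by exact_mod_cast h
        nlinarith
      · have : (m : ℝ) ≤ ((i : ℕ) : ℝ) := by exact_mod_cast not_lt.1 h
        nlinarith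
    rw [Finset.sum_add_distrib, aux_z2, ← Finset.mul_sum, Finset.sum_sub_distrib, hsσ,
      aux_z1] at key
    linarith

/-- for even `n`, the fully-crossed 0-1 instance
(`p j = 0, q j = 1` for the first `n/2` jobs and `p j = 1, q j = 0` for the
rest) has `UB = n(n+1)/2`, `LB = n(n/2+1)/2`, and hence
`UB/LB = (2n+2)/(n+2)`. -/
theorem stmt_9 (n : ℕ) (hn : 2 ≤ n) (heven : Even n)
    (p q : Fin n → ℝ)
    (hp : ∀ j : Fin n, p j = if (j : ℕ) < n / 2 then 0 else 1)
    (hq : ∀ j : Fin n, q j = if (j : ℕ) < n / 2 then 1 else 0) :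
    UBval n p q = n * (n + 1) / 2 ∧
    LBval n p q = n * ((n : ℝ) / 2 + 1) / 2 ∧
    UBval n p q / LBval n p q = (2 * n + 2) / (n + 2) := by
  obtain ⟨m, rfl⟩ := heven
  have hm : (m + m) / 2 = m := by omega
  rw [hm] at hp hq
  have hm1 : (1 : ℝ) ≤ m := by
    have : 1 ≤ m := by omega
    exact_mod_cast this
  have hqr : ∀ i, q (Fin.revPerm i) = if (i : ℕ) < m then (0 : ℝ) else 1 := by
    intro i
    rw [hq]
    have := i.2
    simp only [Fin.revPerm_apply, Fin.val_rev]
    by_cases h : (i : ℕ) < m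
    · rw [if_neg (by omega), if_pos h]
    · rw [if_pos (by omega), if_neg h]
  have hP := aux_min m p (fun j => by rw [hp]; split_ifs <;> norm_num)
    (fun j => by rw [hp]; split_ifs <;> norm_num)
    (by rw [← aux_z1 m]; exact Finset.sum_congr rfl (fun i _ => hp i)) (Equiv.refl _) hp
  have hQ := aux_min m q (fun j => by rw [hq]; split_ifs <;> norm_num)
    (fun j => by rw [hq]; split_ifs <;> norm_num)
    (by
      rw [← Equiv.sum_comp Fin.revPerm q, ← aux_z1 m]
      exact Finset.sum_congr rfl (fun i _ => hqr i)) Fin.revPerm hqr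
  have hU : UBval (m + m) p q = ((m + m : ℕ) : ℝ) * (((m + m : ℕ) : ℝ) + 1) / 2 := by
    have hc : ∀ σ : Equiv.Perm (Fin (m + m)), cost (m + m) (fun j => p j + q j) σ =
        ((m + m : ℕ) : ℝ) * (((m + m : ℕ) : ℝ) + 1) / 2 := by
      intro σ
      have h1 : ∀ j, p j + q j = 1 := by
        intro j
        rw [hp, hq]
        split_ifs <;> norm_num
      simp only [cost, h1, mul_one]
      rw [Fin.sum_univ_eq_sum_range (fun i => ((m + m : ℕ) : ℝ) - (i : ℝ)) (m + m), aux_sum]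
      ring
    unfold UBval
    simp only [hc, exists_const]
    simp
  have hL : LBval (m + m) p q =
      ((m + m : ℕ) : ℝ) * (((m + m : ℕ) : ℝ) / 2 + 1) / 2 := by
    unfold LBval
    rw [hP, hQ]
    push_cast
    ring
  refine ⟨hU, hL, ?_⟩
  rw [hU, hL]
  push_cast
  have : (m : ℝ) ≠ 0 := by linarith
  have h2 : (m : ℝ) + m + 2 ≠ 0 := by linarith
  rw [div_eq_div_iff (by positivity) h2]
  ring
end

section
/- Let n ≥ 1 be odd and consider the instance on n jobs in which: job j has p(j) = 0, q(j) = 1 for j ≤ (n−1)/2, job (n+1)/2 has p = 0 and q = 1, and job j has p(j) = 1, q(j) = 0 for j ≥ (n+1)/2 + 1. Then UB = min_σ C_{p+q}(σ) = n(n+1)/2, LB = (min_σ C_p(σ)) + (min_τ C_q(τ)) = (n+1)²/4, and hence UB/LB = 2n/(n+1). -/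
open Finset

theorem sum_aux (c d : ℕ) :
    ∑ i ∈ Finset.range (c + d), (((c + d : ℕ) : ℝ) - (i : ℝ)) * (if i < c then 0 else 1)
      = (d : ℝ) * (d + 1) / 2 := by
  have key : ∀ d : ℕ, ∑ x ∈ Finset.range d, ((d : ℝ) - (x : ℝ)) = (d : ℝ) * (d + 1) / 2 := by
    intro d
    have h2 : ∀ m : ℕ, ∑ x ∈ Finset.range m, ((d : ℝ) - (x : ℝ))
        = d * m - (m : ℝ) * (m - 1) / 2 := by
      intro m
      induction m with
      | zero => simp
      | succ m ih => rw [Finset.sum_range_succ, ih]; push_cast; ring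
    rw [h2]; ring
  rw [Finset.sum_range_add, Finset.sum_eq_zero, zero_add, ← key d]
  · apply Finset.sum_congr rfl
    intro x _
    rw [if_neg (by omega)]
    push_cast
    ring
  · intro x hx
    rw [if_pos (Finset.mem_range.1 hx), mul_zero]

theorem sInf_aux (n c d : ℕ) (hcd : c + d = n) (w : Fin n → ℝ) (π : Equiv.Perm (Fin n))
    (hw : ∀ i : Fin n, w (π i) = if (i : ℕ) < c then 0 else 1) :
    sInf {v : ℝ | ∃ σ : Equiv.Perm (Fin n), v = cost n w σ} = (d : ℝ) * (d + 1) / 2 := by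
  have hval : cost n w π = (d : ℝ) * (d + 1) / 2 := by
    rw [← sum_aux c d, hcd, ← Fin.sum_univ_eq_sum_range
      (fun i => ((n : ℝ) - (i : ℝ)) * (if i < c then 0 else 1)) n]
    unfold cost
    simp only [hw]
  have hanti : Antivary (fun i : Fin n => (n : ℝ) - ((i : ℕ) : ℝ)) (fun i => w (π i)) := by
    intro i j hij
    simp only [hw] at hij
    have : (i : ℕ) ≤ (j : ℕ) := by
      by_contra hlt
      split_ifs at hij <;> first | omega | norm_num at hij
    have h' : ((i : ℕ) : ℝ) ≤ ((j : ℕ) : ℝ) := by exact_mod_cast this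
    simp only
    linarith
  have hle : IsLeast {v : ℝ | ∃ σ : Equiv.Perm (Fin n), v = cost n w σ} (cost n w π) := by
    refine ⟨⟨π, rfl⟩, ?_⟩
    rintro v ⟨σ, rfl⟩
    have := hanti.sum_mul_le_sum_mul_comp_perm (σ := σ.trans π.symm)
    simpa [cost] using this
  rw [hle.csInf_eq, hval]

/-- for odd `n`, the instance in which the first
`(n−1)/2` jobs and job `(n+1)/2` have `p = 0, q = 1` while the jobs
`j ≥ (n+1)/2 + 1` have `p = 1, q = 0` (1-indexed; equivalently the first
`(n+1)/2` jobs have `p = 0, q = 1` and the rest `p = 1, q = 0`) satisfies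
`UB = n(n+1)/2`, `LB = (n+1)²/4`, and hence `UB/LB = 2n/(n+1)`. -/
theorem stmt_10 (n : ℕ) (hn : 1 ≤ n) (hodd : Odd n)
    (p q : Fin n → ℝ)
    (hp : ∀ j : Fin n, p j = if (j : ℕ) + 1 ≤ (n + 1) / 2 then 0 else 1)
    (hq : ∀ j : Fin n, q j = if (j : ℕ) + 1 ≤ (n + 1) / 2 then 1 else 0) :
    UBval n p q = n * (n + 1) / 2 ∧
    LBval n p q = ((n : ℝ) + 1) ^ 2 / 4 ∧
    UBval n p q / LBval n p q = 2 * n / (n + 1) := by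
  obtain ⟨k, rfl⟩ := hodd
  have hk : (2 * k + 1 + 1) / 2 = k + 1 := by omega
  simp only [hk] at hp hq
  have hU : UBval (2 * k + 1) p q
      = ((2 * k + 1 : ℕ) : ℝ) * (((2 * k + 1 : ℕ) : ℝ) + 1) / 2 := by
    apply sInf_aux (2 * k + 1) 0 (2 * k + 1) (by omega) _ 1
    intro i
    simp only [hp, hq]
    split_ifs <;> simp_all
  have hL : LBval (2 * k + 1) p q = (((2 * k + 1 : ℕ) : ℝ) + 1) ^ 2 / 4 := by
    unfold LBval
    rw [sInf_aux (2 * k + 1) (k + 1) k (by omega) p 1,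
      sInf_aux (2 * k + 1) k (k + 1) (by omega) q Fin.revPerm]
    · push_cast; ring
    · intro i
      have := i.isLt
      simp only [hq, Fin.revPerm_apply, Fin.val_rev]
      split_ifs <;> first | rfl | omega
    · intro i
      simp only [hp, Equiv.Perm.one_apply]
      split_ifs <;> first | rfl | omega
  refine ⟨hU, hL, ?_⟩
  rw [hU, hL]
  have : (((2 * k + 1 : ℕ) : ℝ) + 1) ≠ 0 := by positivity
  field_simp
  try ring
end

section
/- Let n ≥ 2 be even, let 0 ≤ Δ ≤ n with Δ even (so that n − Δ is even), and consider the fully-crossed 0-1 instance on n jobs: p(j) = 0, q(j) = 1 for j ≤ n/2 and p(j) = 1, q(j) = 0 for j > n/2. Then the optimal value of RecSMSP on this instance is OPT(Δ) = (n² + Δ² + 2n)/4, attained by a solution that applies the (n−Δ)/2 available position swaps between the first-stage and second-stage schedules to the outer-most positions. -/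
open Finset

lemma aux_pos (d k : ℕ) :
    ∑ i ∈ range (2 * d + 2 * k), max (|((d : ℝ) + k) - 1 / 2 - (i : ℝ)| - d) 0 = (k : ℝ) ^ 2 := by
  induction k with
  | zero =>
    simp only [Nat.cast_zero]
    rw [show (0 : ℝ) ^ 2 = 0 by norm_num]
    apply Finset.sum_eq_zero
    intro i hi
    have h1 : i + 1 ≤ 2 * d := by simpa using hi
    have h2 : (i : ℝ) + 1 ≤ 2 * d := by exact_mod_cast h1
    have h3 : (0 : ℝ) ≤ i := Nat.cast_nonneg i
    apply max_eq_right
    rw [sub_nonpos, abs_le]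
    constructor <;> linarith
  | succ k ih =>
    rw [show 2 * d + 2 * (k + 1) = (2 * d + 2 * k + 1) + 1 by ring, Finset.sum_range_succ,
      Finset.sum_range_succ']
    have e : ∀ i : ℕ, max (|((d : ℝ) + ((k + 1 : ℕ) : ℝ)) - 1 / 2 - ((i + 1 : ℕ) : ℝ)| - d) 0
        = max (|((d : ℝ) + k) - 1 / 2 - (i : ℝ)| - d) 0 := by
      intro i
      push_cast
      congr 3
      ring
    simp only [e]
    rw [ih]
    have hd : (0 : ℝ) ≤ d := Nat.cast_nonneg d
    have hk : (0 : ℝ) ≤ k := Nat.cast_nonneg k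
    push_cast
    rw [abs_of_nonneg (by linarith), abs_of_nonpos (by linarith), max_eq_left (by linarith),
      max_eq_left (by linarith)]
    ring

lemma aux_base (a : ℝ) (m : ℕ) :
    ∑ i ∈ range m, (a - (i : ℝ)) = m * a - m * (m - 1) / 2 := by
  induction m with
  | zero => simp
  | succ m ih => rw [Finset.sum_range_succ, ih]; push_cast; ring

lemma aux_cost (d k : ℕ) (a : ℝ) :
    ∑ i ∈ range (2 * d + 2 * k),
      (a - (i : ℝ)) * (if i < k then 0 else if i < 2 * d + k then 1 else 2)
      = 2 * d * (a - k) - d * (2 * d - 1) + 2 * k * (a - 2 * d - k) - k * (k - 1) := by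
  induction k generalizing a with
  | zero =>
    have : ∑ i ∈ range (2 * d + 2 * 0),
      (a - (i : ℝ)) * (if i < 0 then 0 else if i < 2 * d + 0 then 1 else 2)
      = ∑ i ∈ range (2 * d), (a - (i : ℝ)) := by
      apply Finset.sum_congr (by simp)
      intro i hi
      have : i < 2 * d := by simpa using hi
      simp [this]
    rw [this, aux_base]
    push_cast
    ring
  | succ k ih =>
    rw [show 2 * d + 2 * (k + 1) = (2 * d + 2 * k + 1) + 1 by ring, Finset.sum_range_succ,
      Finset.sum_range_succ']
    have e : ∀ i : ℕ, (a - ((i + 1 : ℕ) : ℝ)) *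
        (if i + 1 < k + 1 then 0 else if i + 1 < 2 * d + (k + 1) then 1 else 2)
        = ((a - 1) - (i : ℝ)) * (if i < k then 0 else if i < 2 * d + k then 1 else 2) := by
      intro i
      have h1 : i + 1 < k + 1 ↔ i < k := by omega
      have h2 : i + 1 < 2 * d + (k + 1) ↔ i < 2 * d + k := by omega
      simp only [h1, h2]
      push_cast
      ring
    simp only [e]
    rw [ih, if_pos (by omega), if_neg (by omega), if_neg (by omega)]
    push_cast
    ring

lemma aux_lower (d k : ℕ) (p q : Fin (2 * d + 2 * k) → ℝ)
    (hpq : ∀ j, (p j = 0 ∧ q j = 1) ∨ (p j = 1 ∧ q j = 0))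
    (σ τ : Equiv.Perm (Fin (2 * d + 2 * k)))
    (h : 2 * d ≤ (Finset.univ.filter (fun j => σ.symm j = τ.symm j)).card) :
    (2 * d + 2 * k) * (2 * d + 2 * k + 1) / 2 - (k : ℝ) * (2 * d + k)
      ≤ cost _ p σ + cost _ q τ := by
  set x : Fin (2 * d + 2 * k) → ℝ := fun i => p (σ i) + q (τ i) - 1 with hx
  have hx1 : ∀ i, |x i| ≤ 1 := by
    intro i
    rw [abs_le]
    simp only [hx]
    rcases hpq (σ i) with ⟨h1, -⟩ | ⟨h1, -⟩ <;> rcases hpq (τ i) with ⟨-, h2⟩ | ⟨-, h2⟩ <;>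
      rw [h1, h2] <;> norm_num
  have hx0 : ∑ i, x i = 0 := by
    simp only [hx, Finset.sum_sub_distrib, Finset.sum_add_distrib]
    rw [Equiv.sum_comp σ p, Equiv.sum_comp τ q, ← Finset.sum_add_distrib, ← Finset.sum_sub_distrib]
    apply Finset.sum_eq_zero
    intro j _
    rcases hpq j with ⟨h1, h2⟩ | ⟨h1, h2⟩ <;> rw [h1, h2] <;> norm_num
  have hxs : ∑ i, |x i| ≤ 2 * k := by
    rw [← Equiv.sum_comp σ.symm (fun i => |x i|)]
    have : ∀ j, |x (σ.symm j)| ≤ 1 - (if σ.symm j = τ.symm j then (1 : ℝ) else 0) := by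
      intro j
      split_ifs with hj
      · have : x (σ.symm j) = 0 := by
          simp only [hx, Equiv.apply_symm_apply]
          rw [hj, Equiv.apply_symm_apply]
          rcases hpq j with ⟨h1, h2⟩ | ⟨h1, h2⟩ <;> rw [h1, h2] <;> norm_num
        simp [this]
      · simpa using hx1 _
    refine (Finset.sum_le_sum fun j _ => this j).trans ?_
    rw [Finset.sum_sub_distrib, Finset.sum_boole]
    have h' : (2 * d : ℝ) ≤ ((Finset.univ.filter (fun j => σ.symm j = τ.symm j)).card : ℝ) := by
      exact_mod_cast h
    simp only [Finset.sum_const, Finset.card_univ, Fintype.card_fin, nsmul_eq_mul]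
    push_cast
    linarith
  have hcost : cost _ p σ + cost _ q τ =
      ∑ i : Fin (2 * d + 2 * k), (((2 * d + 2 * k : ℕ) : ℝ) - ((i : ℕ) : ℝ))
      + ∑ i : Fin (2 * d + 2 * k), (((d : ℝ) + k) - 1 / 2 - ((i : ℕ) : ℝ)) * x i := by
    have : ∑ i, ((d : ℝ) + k + 1 / 2) * x i = 0 := by rw [← Finset.mul_sum, hx0, mul_zero]
    rw [← add_zero (∑ i : Fin (2 * d + 2 * k), (((d : ℝ) + k) - 1 / 2 - ((i : ℕ) : ℝ)) * x i), ← this]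
    unfold cost
    rw [← Finset.sum_add_distrib]
    rw [← Finset.sum_add_distrib, ← Finset.sum_add_distrib]
    apply Finset.sum_congr rfl
    intro i _
    simp only [hx]
    push_cast
    ring
  have hlow : ∀ i : Fin (2 * d + 2 * k),
      -(max (|((d : ℝ) + k) - 1 / 2 - ((i : ℕ) : ℝ)| - d) 0 + d * |x i|) ≤
      (((d : ℝ) + k) - 1 / 2 - ((i : ℕ) : ℝ)) * x i := by
    intro i
    set c := ((d : ℝ) + k) - 1 / 2 - ((i : ℕ) : ℝ)
    have h1 : -(|c| * |x i|) ≤ c * x i := by rw [← abs_mul]; exact neg_abs_le _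
    have h2 := le_max_left (|c| - d) 0
    have h3 := le_max_right (|c| - d) 0
    nlinarith [hx1 i, abs_nonneg (x i), mul_le_mul_of_nonneg_right h2 (abs_nonneg (x i)),
      mul_le_mul_of_nonneg_left (hx1 i) h3]
  have hsum := Finset.sum_le_sum fun i (_ : i ∈ Finset.univ) => hlow i
  rw [Finset.sum_neg_distrib, Finset.sum_add_distrib, ← Finset.mul_sum,
    Fin.sum_univ_eq_sum_range (fun i => max (|((d : ℝ) + k) - 1 / 2 - (i : ℝ)| - d) 0),
    aux_pos] at hsum
  rw [hcost, Fin.sum_univ_eq_sum_range (fun i => ((2 * d + 2 * k : ℕ) : ℝ) - (i : ℝ)), aux_base]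
  have hd : (0 : ℝ) ≤ d := Nat.cast_nonneg d
  have := mul_le_mul_of_nonneg_left hxs hd
  push_cast
  nlinarith

def auxSwap (d k : ℕ) (i : Fin (2 * d + 2 * k)) : Fin (2 * d + 2 * k) :=
  if (i : ℕ) < k ∨ 2 * d + k ≤ (i : ℕ) then i.rev else i

lemma auxSwap_inv (d k : ℕ) : Function.Involutive (auxSwap d k) := by
  intro i
  unfold auxSwap
  have := i.2
  by_cases h : (i : ℕ) < k ∨ 2 * d + k ≤ (i : ℕ)
  · rw [if_pos h, if_pos, Fin.rev_rev]
    rw [Fin.val_rev]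
    omega
  · rw [if_neg h, if_neg h]

theorem stmt_12 (n : ℕ) (hn : 2 ≤ n) (hneven : Even n)
    (Δ : ℕ) (hΔ : Δ ≤ n) (hΔeven : Even Δ)
    (p q : Fin n → ℝ)
    (hp : ∀ j : Fin n, p j = if (j : ℕ) < n / 2 then 0 else 1)
    (hq : ∀ j : Fin n, q j = if (j : ℕ) < n / 2 then 1 else 0) :
    OPT n p q Δ = ((n : ℝ) ^ 2 + (Δ : ℝ) ^ 2 + 2 * n) / 4 := by
  obtain ⟨d, rfl⟩ : ∃ d, Δ = 2 * d := by obtain ⟨d, h⟩ := hΔeven; exact ⟨d, by omega⟩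
  obtain ⟨k, rfl⟩ : ∃ k, n = 2 * d + 2 * k := by
    obtain ⟨m, h⟩ := hneven; exact ⟨m - d, by omega⟩
  have hhalf : (2 * d + 2 * k) / 2 = d + k := by omega
  rw [hhalf] at hp hq
  unfold OPT
  apply IsLeast.csInf_eq
  constructor
  · refine ⟨1, (auxSwap_inv d k).toPerm, ?_, ?_⟩
    · have := Finset.card_le_card_of_injOn (s := (Finset.univ : Finset (Fin (2 * d))))
        (t := Finset.univ.filter (fun j : Fin (2 * d + 2 * k) =>
          (1 : Equiv.Perm (Fin (2 * d + 2 * k))).symm j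
            = ((auxSwap_inv d k).toPerm : Equiv.Perm _).symm j))
        (fun i => ⟨k + i, by have := i.2; omega⟩) ?_ ?_
      · simpa using this
      · intro i _
        have := i.2
        simp only [Finset.coe_filter, Finset.mem_univ, true_and, Set.mem_ofPred_eq]
        rw [Equiv.eq_symm_apply]
        change auxSwap d k ⟨k + i, _⟩ = _
        unfold auxSwap
        rw [if_neg]
        simp only
        omega
      · intro i _ j _ hij
        simp only [Fin.mk.injEq] at hij
        exact Fin.ext (by omega)
    · unfold cost
      rw [← Finset.sum_add_distrib]
      have := aux_cost d k (2 * d + 2 * k)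
      rw [← Fin.sum_univ_eq_sum_range (fun i => ((2 * d + 2 * k : ℝ) - (i : ℝ)) *
        (if i < k then 0 else if i < 2 * d + k then 1 else 2))] at this
      trans (∑ i : Fin (2 * d + 2 * k), ((2 * d + 2 * k : ℝ) - ((i : ℕ) : ℝ)) *
        (if (i : ℕ) < k then 0 else if (i : ℕ) < 2 * d + k then 1 else 2))
      · rw [this]; push_cast; ring
      · apply Finset.sum_congr rfl
        intro i _
        have hi := i.2
        change _ = _ * p i + _ * q (auxSwap d k i)
        rw [hp, hq]
        unfold auxSwap
        by_cases h1 : (i : ℕ) < k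
        · rw [if_pos h1, if_pos (Or.inl h1), if_pos (by omega), if_neg (by rw [Fin.val_rev]; omega)]
          push_cast; ring
        · by_cases h2 : (i : ℕ) < 2 * d + k
          · rw [if_neg h1, if_pos h2, if_neg (show ¬ ((i : ℕ) < k ∨ 2 * d + k ≤ (i : ℕ)) by omega)]
            split_ifs <;> push_cast <;> ring
          · rw [if_neg h1, if_neg h2,
              if_pos (show ((i : ℕ) < k ∨ 2 * d + k ≤ (i : ℕ)) by omega),
              if_neg (by omega), if_pos (by rw [Fin.val_rev]; omega)]
            push_cast; ring
  · rintro v ⟨σ, τ, h, rfl⟩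
    have := aux_lower d k p q (by
      intro j
      rw [hp, hq]
      split_ifs <;> simp) σ τ h
    refine le_trans (le_of_eq ?_) this
    push_cast
    ring
end
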